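/- arXiv:1302.1678 — 4 statements merged into one kernel-verified Lean document; each statement's English description precedes it below -/
import Mathlib

section
/- (Theorem 3 of the paper, exact-conservation part.) Let m ≥ 1, d = 2m, let J ∈ ℝ^{d×d} be skew-symmetric, let s ≥ 1, k ≥ s, and let H : ℝ^d → ℝ be a polynomial with s · deg H ≤ 2k. Let (c_ℓ, b_ℓ)_{ℓ=1}^k be a quadrature on [0,1] exact for polynomials of degree ≤ 2k−1, let h > 0 and η₀, …, η_{s−1} ∈ ℝ. Suppose u : [0, h] → ℝ^d is a polynomial map of degree ≤ s satisfying u'(ch) = Σ_{j=0}^{s−1} P_j(c) η_j γ̂_j for all c ∈ [0,1], where γ̂_j = Σ_{ℓ=1}^k b_ℓ P_j(c_ℓ) J ∇H(u(c_ℓ h)). Then H(u(h)) = H(u(0)). -/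
open MeasureTheory Polynomial Matrix

/-- The shifted Legendre polynomial `P j`, orthonormal on `[0,1]`. -/
noncomputable def legP (j : ℕ) : ℝ → ℝ := fun x =>
  (Real.sqrt (2 * j + 1) / (Nat.factorial j)) *
    (Polynomial.derivative^[j] ((Polynomial.X ^ 2 - Polynomial.X) ^ j)).eval x

/-!
Since `x ↦ H (u (x h))` is a polynomial of degree at most `s · deg H`, its derivative is integrated
exactly by the quadrature, so `H (u h) - H (u 0)` is a weighted sum of its values at the nodes.
By the chain rule and the form of `u'`, that sum is `h ∑ⱼ ηⱼ ⟪gⱼ, J gⱼ⟫`, where `gⱼ` is the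
quadrature approximation of `∫₀¹ P j (x) ∇H (u (x h)) dx`. Every term vanishes because `J` is
skew-symmetric.
-/

section PolynomialCurve

variable {σ R : Type*} [CommSemiring R]

theorem eval_mvPolynomial_aeval (U : σ → R[X]) (H : MvPolynomial σ R) (x : R) :
    (MvPolynomial.aeval U H).eval x = MvPolynomial.eval (fun i => (U i).eval x) H :=
  MvPolynomial.comp_aeval_apply U (Polynomial.aeval x) H

theorem exists_polynomial_eval_eq_eval_curve (H : MvPolynomial σ R) {s : ℕ}
    (a : Fin (s + 1) → σ → R) :
    ∃ p : R[X], p.natDegree ≤ s * H.totalDegree ∧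
      ∀ t, p.eval t = MvPolynomial.eval (∑ i : Fin (s + 1), t ^ (i : ℕ) • a i) H := by
  let U : σ → R[X] := fun n => ∑ i : Fin (s + 1), C (a i n) * X ^ (i : ℕ)
  have natDegree_U (n : σ) : (U n).natDegree ≤ s :=
    natDegree_sum_le_of_forall_le _ _ fun i _ =>
      (natDegree_C_mul_X_pow_le _ _).trans (Nat.le_of_lt_succ i.isLt)
  have eval_U (t : R) : (fun n => (U n).eval t) = ∑ i : Fin (s + 1), t ^ (i : ℕ) • a i := by
    ext n
    simp only [U, eval_finsetSum, eval_mul, eval_C, eval_pow, eval_X, Finset.sum_apply,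
      Pi.smul_apply, smul_eq_mul, mul_comm]
  refine ⟨MvPolynomial.aeval U H, ?_, fun t => ?_⟩
  · rw [mul_comm]
    exact MvPolynomial.aeval_natDegree_le H le_rfl U natDegree_U
  · rw [eval_mvPolynomial_aeval, eval_U]

end PolynomialCurve

theorem dotProduct_mulVec_self_of_transpose_eq_neg {ι R : Type*} [Fintype ι] [CommRing R]
    [IsAddTorsionFree R] {J : Matrix ι ι R} (hJ : Jᵀ = -J) (v : ι → R) : v ⬝ᵥ J *ᵥ v = 0 := by
  rw [← self_eq_neg]
  calc v ⬝ᵥ J *ᵥ v = Jᵀ *ᵥ v ⬝ᵥ v := by rw [dotProduct_mulVec, mulVec_transpose]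
    _ = -(v ⬝ᵥ J *ᵥ v) := by rw [hJ, neg_mulVec, neg_dotProduct, dotProduct_comm]

theorem inner_toEuclideanLin_self_of_transpose_eq_neg {ι : Type*} [Fintype ι] [DecidableEq ι]
    {J : Matrix ι ι ℝ} (hJ : Jᵀ = -J) (v : EuclideanSpace ℝ ι) :
    inner ℝ v (toEuclideanLin J v) = 0 := by
  rw [real_inner_comm, EuclideanSpace.inner_eq_star_dotProduct, star_trivial]
  exact dotProduct_mulVec_self_of_transpose_eq_neg hJ v.ofLp

section Quadrature

variable {ν : Type*} [Fintype ν] {c b : ν → ℝ}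

/-- The quadrature on `[0,1]` with nodes `c` and weights `b` is exact for polynomials of degree at
most `n`. The nodes may lie outside `[0,1]`. -/
def IsExactQuadrature (c b : ν → ℝ) (n : ℕ) : Prop :=
  ∀ q : ℝ[X], q.natDegree ≤ n → ∑ ℓ, b ℓ * q.eval (c ℓ) = ∫ x in (0 : ℝ)..1, q.eval x

theorem IsExactQuadrature.sum_eval_derivative {n : ℕ} (hquad : IsExactQuadrature c b n) {p : ℝ[X]}
    (hp : p.natDegree ≤ n + 1) :
    ∑ ℓ, b ℓ * p.derivative.eval (c ℓ) = p.eval 1 - p.eval 0 := by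
  rw [hquad p.derivative ((natDegree_derivative_le p).trans (Nat.sub_le_of_le_add hp))]
  exact intervalIntegral.integral_eq_sub_of_hasDerivAt (fun x _ => p.hasDerivAt x)
    (p.derivative.continuous.intervalIntegrable _ _)

variable {V W : Type*} [AddCommMonoid V] [Module ℝ V] [AddCommMonoid W] [Module ℝ W]

/-- The discrete coefficient `γ̂ = ∑ ℓ, b_ℓ f(c_ℓ) g_ℓ`: the quadrature approximation of
`∫₀¹ f(x) g(x) dx`, where `g_ℓ` is the value of the vector-valued `g` at the node `c_ℓ`. -/
noncomputable def quadratureCoeff (c b : ν → ℝ) (f : ℝ → ℝ) (g : ν → V) : V :=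
  ∑ ℓ, (b ℓ * f (c ℓ)) • g ℓ

theorem map_quadratureCoeff (L : V →ₗ[ℝ] W) (f : ℝ → ℝ) (g : ν → V) :
    L (quadratureCoeff c b f g) = quadratureCoeff c b f fun ℓ => L (g ℓ) := by
  simp only [quadratureCoeff, map_sum, map_smul]

variable {E : Type*} [NormedAddCommGroup E] [InnerProductSpace ℝ E] {κ : Type*}

theorem inner_quadratureCoeff (f : ℝ → ℝ) (g : ν → E) (v : E) :
    inner ℝ (quadratureCoeff c b f g) v = ∑ ℓ, b ℓ * f (c ℓ) * inner ℝ (g ℓ) v := by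
  simp only [quadratureCoeff, sum_inner, real_inner_smul_left]

theorem sum_weight_mul_inner_sum_smul (P : κ → ℝ → ℝ) (S : Finset κ) (g : ν → E) (v : κ → E) :
    ∑ ℓ, b ℓ * inner ℝ (g ℓ) (∑ j ∈ S, P j (c ℓ) • v j) =
      ∑ j ∈ S, inner ℝ (quadratureCoeff c b (P j) g) (v j) := by
  simp only [inner_quadratureCoeff, inner_sum, real_inner_smul_right, Finset.mul_sum, mul_assoc]
  exact Finset.sum_comm

theorem eval_derivative_eq_inner_of_hasGradientAt [CompleteSpace E] {F : E → ℝ} {w : ℝ → E}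
    {p : ℝ[X]} (hp : ∀ x, p.eval x = F (w x)) {x : ℝ} {g w' : E} (hg : HasGradientAt F g (w x))
    (hw : HasDerivAt w w' x) : p.derivative.eval x = inner ℝ g w' := by
  have hFw : HasDerivAt (F ∘ w) (inner ℝ g w') x := by
    simpa only [InnerProductSpace.toDual_apply_apply] using hg.hasFDerivAt.comp_hasDerivAt x hw
  rw [← show p.eval = F ∘ w from funext hp] at hFw
  exact (p.hasDerivAt x).unique hFw

theorem IsExactQuadrature.apply_one_eq_apply_zero [CompleteSpace E] {n : ℕ}
    (hquad : IsExactQuadrature c b n) {F : E → ℝ} {w : ℝ → E} {p : ℝ[X]}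
    (hp : ∀ x, p.eval x = F (w x)) (hdeg : p.natDegree ≤ n + 1) {g : ν → E}
    (hg : ∀ ℓ, HasGradientAt F (g ℓ) (w (c ℓ))) {P : κ → ℝ → ℝ} {S : Finset κ} {A : κ → E → E}
    (hA : ∀ j v, inner ℝ v (A j v) = 0)
    (hw : ∀ ℓ, HasDerivAt w (∑ j ∈ S, P j (c ℓ) • A j (quadratureCoeff c b (P j) g)) (c ℓ)) :
    F (w 1) = F (w 0) := by
  rw [← sub_eq_zero]
  calc F (w 1) - F (w 0)
      = ∑ ℓ, b ℓ * p.derivative.eval (c ℓ) := by rw [hquad.sum_eval_derivative hdeg, hp, hp]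
    _ = ∑ ℓ, b ℓ * inner ℝ (g ℓ) (∑ j ∈ S, P j (c ℓ) • A j (quadratureCoeff c b (P j) g)) := by
      simp only [fun ℓ => eval_derivative_eq_inner_of_hasGradientAt hp (hg ℓ) (hw ℓ)]
    _ = ∑ j ∈ S, inner ℝ (quadratureCoeff c b (P j) g) (A j (quadratureCoeff c b (P j) g)) :=
      sum_weight_mul_inner_sum_smul P S g _
    _ = 0 := Finset.sum_eq_zero fun j _ => hA j _

end Quadrature

theorem stmt12_general {ι ν κ : Type*} [Fintype ι] [DecidableEq ι] [Fintype ν]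
    {J : Matrix ι ι ℝ} (hJ : Jᵀ = -J) {H : MvPolynomial ι ℝ} {Hf : EuclideanSpace ℝ ι → ℝ}
    (hHf : ∀ y, Hf y = MvPolynomial.eval (fun i => y i) H)
    {c b : ν → ℝ} {n : ℕ} (hquad : IsExactQuadrature c b n)
    {s : ℕ} (hH : s * H.totalDegree ≤ n + 1)
    {h : ℝ} {P : κ → ℝ → ℝ} {S : Finset κ} {η : κ → ℝ} {u : ℝ → EuclideanSpace ℝ ι}
    (hupoly : ∃ a : Fin (s + 1) → EuclideanSpace ℝ ι,
      ∀ t : ℝ, u t = ∑ i : Fin (s + 1), t ^ (i : ℕ) • a i)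
    (hu' : ∀ ℓ, HasDerivAt u
      (∑ j ∈ S, P j (c ℓ) • (η j • quadratureCoeff c b (P j) fun ℓ =>
        toEuclideanLin J (gradient Hf (u (c ℓ * h))))) (c ℓ * h)) :
    Hf (u h) = Hf (u 0) := by
  obtain ⟨a, ha⟩ := hupoly
  obtain ⟨p, hdeg, hp⟩ :=
    exists_polynomial_eval_eq_eval_curve H fun i : Fin (s + 1) => h ^ (i : ℕ) • (a i).ofLp
  have eval_p (x : ℝ) : p.eval x = Hf (u (x * h)) := by
    simp only [hp, hHf, ha, mul_pow, mul_smul, WithLp.ofLp_sum, WithLp.ofLp_smul]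
  have hasGradientAt_Hf (y : EuclideanSpace ℝ ι) : HasGradientAt Hf (gradient Hf y) y := by
    rw [funext hHf]
    exact (AnalyticOnNhd.eval_continuousLinearMap
      (EuclideanSpace.equiv ι ℝ).toContinuousLinearMap H y trivial).differentiableAt.hasGradientAt
  have skew (j : κ) (v : EuclideanSpace ℝ ι) : inner ℝ v ((h * η j) • toEuclideanLin J v) = 0 := by
    rw [real_inner_smul_right, inner_toEuclideanLin_self_of_transpose_eq_neg hJ, mul_zero]
  have hasDerivAt_rescaled (ℓ : ν) : HasDerivAt (fun x => u (x * h))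
      (∑ j ∈ S, P j (c ℓ) • (h * η j) • toEuclideanLin J
        (quadratureCoeff c b (P j) fun ℓ => gradient Hf (u (c ℓ * h)))) (c ℓ) := by
    convert! (hu' ℓ).scomp (c ℓ) (hasDerivAt_mul_const h) using 1
    simp only [map_quadratureCoeff, Finset.smul_sum, smul_comm h, mul_smul]
  simpa only [one_mul, zero_mul] using
    hquad.apply_one_eq_apply_zero eval_p (hdeg.trans hH) (fun ℓ => hasGradientAt_Hf _) skew
      hasDerivAt_rescaled

/-- Theorem 3 of the paper, exact-conservation part.  If `J` is
skew-symmetric, `H` is a polynomial with `s · deg H ≤ 2k`, the quadrature is exact on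
`Π_{2k-1}`, and `u ∈ Π_s` satisfies `u'(ch) = ∑_{j<s} P_j(c) η_j γ̂_j` with
`γ̂_j = ∑_ℓ b_ℓ P_j(c_ℓ) J ∇H(u(c_ℓ h))`, then `H(u(h)) = H(u(0))`. -/
theorem stmt12 (m : ℕ) (hm : 1 ≤ m)
    (J : Matrix (Fin (2 * m)) (Fin (2 * m)) ℝ) (hJ : Jᵀ = -J)
    (s k : ℕ) (hs : 1 ≤ s) (hk : s ≤ k)
    (H : MvPolynomial (Fin (2 * m)) ℝ) (hH : s * H.totalDegree ≤ 2 * k)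
    (Hf : EuclideanSpace ℝ (Fin (2 * m)) → ℝ)
    (hHf : ∀ y, Hf y = MvPolynomial.eval (fun i => y i) H)
    (c b : Fin k → ℝ) (hc : ∀ ℓ, c ℓ ∈ Set.Icc (0:ℝ) 1)
    (hquad : ∀ q : Polynomial ℝ, q.natDegree ≤ 2 * k - 1 →
      ∑ ℓ, b ℓ * q.eval (c ℓ) = ∫ x in (0:ℝ)..1, q.eval x)
    (h : ℝ) (hh : 0 < h) (η : ℕ → ℝ)
    (u : ℝ → EuclideanSpace ℝ (Fin (2 * m)))
    (hupoly : ∃ a : Fin (s + 1) → EuclideanSpace ℝ (Fin (2 * m)),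
      ∀ t : ℝ, u t = ∑ i : Fin (s + 1), t ^ (i : ℕ) • a i)
    (hu' : ∀ cc ∈ Set.Icc (0:ℝ) 1,
      HasDerivAt u
        (∑ j ∈ Finset.range s, legP j cc •
          (η j • ∑ ℓ, (b ℓ * legP j (c ℓ)) •
            Matrix.toEuclideanLin J (gradient Hf (u (c ℓ * h)))))
        (cc * h)) :
    Hf (u h) = Hf (u 0) := by
  exact stmt12_general hJ hHf hquad (by omega) hupoly fun ℓ => hu' (c ℓ) (hc ℓ)
end

section
/- (Theorem 3 of the paper, asymptotic part.) Let m ≥ 1, d = 2m, let J ∈ ℝ^{d×d} be skew-symmetric, let H : ℝ^d → ℝ be C^∞, let s ≥ 1, k ≥ s, and let (c_ℓ, b_ℓ)_{ℓ=1}^k be a quadrature on [0,1] exact for polynomials of degree ≤ 2k−1. Suppose that for each h ∈ (0, h₀] there are reals η̂₀(h), …, η̂_{s−1}(h), bounded uniformly in h, and a polynomial map u_h : [0,h] → ℝ^d of degree ≤ s with u_h(0) = y₀, whose range lies in a fixed compact set, satisfying u_h'(ch) = Σ_{j=0}^{s−1} P_j(c) η̂_j(h) γ̂_j(h) for c ∈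 [0,1], where γ̂_j(h) = Σ_{ℓ=1}^k b_ℓ P_j(c_ℓ) J ∇H(u_h(c_ℓ h)). Then H(u_h(h)) − H(y₀) is O(h^{2k+1}) as h → 0⁺. -/
open MeasureTheory Polynomial Matrix

/-!
Expand the velocity of the rescaled solution `V x = u (x * h)` as `∑ v_j P_j`. By the fundamental
theorem of calculus `H (V 1) - H (V 0) = ∑ ⟪∫₀¹ P_j ∇H(V), v_j⟫`. Each `v_j` is a multiple of `J`
applied to the quadrature approximation of that same integral, so by skew-symmetry only the
quadrature error pairs with `v_j`. Bootstrapping with the orthogonality of the `P_j` gives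
`v_j = O(h^(j+1))`, hence `V^(i) = O(h^i)`; with exactness below degree `r = 2k` the error of the
`j`-th moment is then `O(h^(r-j))`, and each summand is `O(h^(r+1))`.
-/

section

open Set Filter Asymptotics

section Legendre

/-- The shifted Legendre polynomial `legP j`, as an element of `ℝ[X]`. -/
noncomputable def legPoly (j : ℕ) : ℝ[X] :=
  C (√(2 * j + 1) / j.factorial) * derivative^[j] ((X ^ 2 - X) ^ j)

lemma legP_eq_eval_legPoly (j : ℕ) (x : ℝ) : legP j x = (legPoly j).eval x := by
  simp [legP, legPoly]

lemma natDegree_legPoly_le (j : ℕ) : (legPoly j).natDegree ≤ j := by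
  have hpow : ((X ^ 2 - X : ℝ[X]) ^ j).natDegree ≤ j * 2 :=
    natDegree_pow_le_of_le j (by compute_degree)
  calc (legPoly j).natDegree
      ≤ ((X ^ 2 - X : ℝ[X]) ^ j).natDegree - j :=
        (natDegree_C_mul_le _ _).trans (natDegree_iterate_derivative _ _)
    _ ≤ j := by omega

lemma eval_iterate_derivative_eq_zero_of_pow_dvd {p : ℝ[X]} {a : ℝ} {n r : ℕ} (hr : r < n)
    (hp : (X - C a) ^ n ∣ p) : (derivative^[r] p).eval a = 0 :=
  dvd_iff_isRoot.1 <| (dvd_pow_self _ (Nat.sub_ne_zero_of_lt hr)).trans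
    (pow_sub_dvd_iterate_derivative_of_pow_dvd r hp)

lemma degree_derivative_lt_of_degree_lt_succ {q : ℝ[X]} {r : ℕ} (hq : q.degree < (r + 1 : ℕ)) :
    (derivative q).degree < r := by
  rw [degree_lt_iff_coeff_zero] at hq ⊢
  intro n hn
  rw [coeff_derivative, hq (n + 1) (by omega), zero_mul]

lemma integral_eval_derivative_mul (p q : ℝ[X]) (a b : ℝ) :
    ∫ x in a..b, (derivative p).eval x * q.eval x =
      p.eval b * q.eval b - p.eval a * q.eval a -
        ∫ x in a..b, p.eval x * (derivative q).eval x := by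
  have hint : ∀ f g : ℝ[X], IntervalIntegrable (fun x => f.eval x * g.eval x) volume a b :=
    fun f g => (f.continuous.mul g.continuous).intervalIntegrable a b
  rw [eq_sub_iff_add_eq, ← intervalIntegral.integral_add (hint _ _) (hint _ _)]
  exact intervalIntegral.integral_deriv_mul_eq_sub (fun x _ => p.hasDerivAt x)
    (fun x _ => q.hasDerivAt x) (p.derivative.continuous.intervalIntegrable a b)
    (q.derivative.continuous.intervalIntegrable a b)

lemma integral_iterate_derivative_mul_eq_zero {p : ℝ[X]} {a b : ℝ} {r : ℕ}
    (ha : (X - C a) ^ r ∣ p) (hb : (X - C b) ^ r ∣ p) {q : ℝ[X]} (hq : q.degree < r) :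
    ∫ x in a..b, (derivative^[r] p).eval x * q.eval x = 0 := by
  induction r generalizing q with
  | zero =>
    have hq0 : q = 0 := degree_eq_bot.1 (WithBot.lt_coe_bot.1 hq)
    simp [hq0]
  | succ r ih =>
    rw [Function.iterate_succ_apply', integral_eval_derivative_mul,
      eval_iterate_derivative_eq_zero_of_pow_dvd r.lt_succ_self ha,
      eval_iterate_derivative_eq_zero_of_pow_dvd r.lt_succ_self hb,
      ih ((pow_dvd_pow _ r.le_succ).trans ha) ((pow_dvd_pow _ r.le_succ).trans hb)
        (degree_derivative_lt_of_degree_lt_succ hq)]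
    simp only [zero_mul, sub_zero]

lemma integral_legPoly_mul_eq_zero {j : ℕ} {q : ℝ[X]} (hq : q.degree < j) :
    ∫ x in (0 : ℝ)..1, (legPoly j * q).eval x = 0 := by
  have hroot : ∀ a : ℝ, a ^ 2 - a = 0 → (X - C a) ^ j ∣ (X ^ 2 - X : ℝ[X]) ^ j :=
    fun a ha => pow_dvd_pow_of_dvd (dvd_iff_isRoot.2 (by simpa [IsRoot] using ha)) j
  simp only [legPoly, eval_mul, eval_C, mul_assoc, intervalIntegral.integral_const_mul,
    integral_iterate_derivative_mul_eq_zero (hroot 0 (by simp)) (hroot 1 (by simp)) hq, mul_zero]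

end Legendre

section Quadrature

variable {ι E : Type*} [Fintype ι] [NormedAddCommGroup E] [NormedSpace ℝ E]

/-- The quadrature on `[0, 1]` with nodes `c` and weights `b` integrates polynomials of degree
`< r` exactly. -/
def IsExactBelow (c b : ι → ℝ) (r : ℕ) : Prop :=
  ∀ q : ℝ[X], q.degree < r → ∑ ℓ, b ℓ * q.eval (c ℓ) = ∫ x in (0 : ℝ)..1, q.eval x

/-- The moment `∫₀¹ p(x) f(x) dx` of `f` against the polynomial `p`. -/
noncomputable def moment (p : ℝ[X]) (f : ℝ → E) : E := ∫ x in (0 : ℝ)..1, p.eval x • f x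

/-- The value of the quadrature with nodes `c` and weights `b` at the integrand of `moment p f`. -/
noncomputable def quadMoment (c b : ι → ℝ) (p : ℝ[X]) (f : ℝ → E) : E :=
  ∑ ℓ, (b ℓ * p.eval (c ℓ)) • f (c ℓ)

variable {c b : ι → ℝ} {p : ℝ[X]} {f g : ℝ → E} {M : ℝ} {n r : ℕ}

lemma isExactBelow_of_natDegree_le
    (hquad : ∀ q : ℝ[X], q.natDegree ≤ r - 1 →
      ∑ ℓ, b ℓ * q.eval (c ℓ) = ∫ x in (0 : ℝ)..1, q.eval x) :
    IsExactBelow c b r := fun q hq =>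
  hquad q <| natDegree_le_iff_coeff_eq_zero.2 fun n hn =>
    (degree_lt_iff_coeff_zero q _).1 hq n (by omega)

lemma quadMoment_sub : quadMoment c b p (f - g) = quadMoment c b p f - quadMoment c b p g := by
  simp only [quadMoment, Pi.sub_apply, smul_sub, Finset.sum_sub_distrib]

lemma quadMoment_congr (hc : ∀ ℓ, c ℓ ∈ Icc (0 : ℝ) 1) (hfg : EqOn f g (Icc 0 1)) :
    quadMoment c b p f = quadMoment c b p g :=
  Finset.sum_congr rfl fun ℓ _ => by rw [hfg (hc ℓ)]

lemma moment_sub (hf : Continuous f) (hg : Continuous g) :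
    moment p (f - g) = moment p f - moment p g := by
  simp only [moment, Pi.sub_apply, smul_sub]
  exact intervalIntegral.integral_sub ((p.continuous.smul hf).intervalIntegrable _ _)
    ((p.continuous.smul hg).intervalIntegrable _ _)

lemma norm_quadMoment_le (hc : ∀ ℓ, c ℓ ∈ Icc (0 : ℝ) 1)
    (hf : ∀ x ∈ Icc (0 : ℝ) 1, ‖f x‖ ≤ M) :
    ‖quadMoment c b p f‖ ≤ (∑ ℓ, |b ℓ * p.eval (c ℓ)|) * M := by
  rw [Finset.sum_mul]
  refine norm_sum_le_of_le _ fun ℓ _ => ?_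
  rw [norm_smul, Real.norm_eq_abs]
  exact mul_le_mul_of_nonneg_left (hf _ (hc ℓ)) (abs_nonneg _)

lemma norm_moment_le (hf : ∀ x ∈ Icc (0 : ℝ) 1, ‖f x‖ ≤ M) :
    ‖moment p f‖ ≤ (∫ x in (0 : ℝ)..1, |p.eval x|) * M := by
  rw [← intervalIntegral.integral_mul_const]
  refine intervalIntegral.norm_integral_le_of_norm_le zero_le_one (ae_of_all _ fun x hx => ?_)
    ((p.continuous.abs.mul_const M).intervalIntegrable _ _)
  rw [norm_smul, Real.norm_eq_abs]
  exact mul_le_mul_of_nonneg_left (hf x (Ioc_subset_Icc_self hx)) (abs_nonneg _)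

lemma moment_sum_pow_smul [CompleteSpace E] (a : ℕ → E) :
    moment p (fun x => ∑ i ∈ Finset.range n, x ^ i • a i) =
      ∑ i ∈ Finset.range n, (∫ x in (0 : ℝ)..1, (p * X ^ i).eval x) • a i := by
  simp only [moment, Finset.smul_sum, smul_smul, ← intervalIntegral.integral_smul_const,
    eval_mul, eval_pow, eval_X]
  exact intervalIntegral.integral_finsetSum fun i _ =>
    Continuous.intervalIntegrable (by fun_prop) _ _

lemma IsExactBelow.quadMoment_sum_pow_smul (hquad : IsExactBelow c b r)
    (hpn : p.natDegree + n ≤ r) (a : ℕ → E) :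
    quadMoment c b p (fun x => ∑ i ∈ Finset.range n, x ^ i • a i) =
      ∑ i ∈ Finset.range n, (∫ x in (0 : ℝ)..1, (p * X ^ i).eval x) • a i := by
  simp only [quadMoment, Finset.smul_sum, smul_smul]
  rw [Finset.sum_comm]
  refine Finset.sum_congr rfl fun i hi => ?_
  have hdeg : (p * X ^ i).degree < (r : WithBot ℕ) := by
    refine degree_le_natDegree.trans_lt (Nat.cast_lt.2 ?_)
    have hmul := natDegree_mul_le (p := p) (q := X ^ i)
    rw [natDegree_X_pow] at hmul
    have := Finset.mem_range.1 hi
    omega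
  rw [← hquad _ hdeg, Finset.sum_smul]
  simp only [eval_mul, eval_pow, eval_X, mul_assoc]

lemma exists_norm_sub_sum_pow_smul_le (hf : ContDiff ℝ n f)
    (hM : ∀ x ∈ Icc (0 : ℝ) 1, ‖iteratedDeriv n f x‖ ≤ M) :
    ∃ a : ℕ → E, ∀ x ∈ Icc (0 : ℝ) 1, ‖f x - ∑ i ∈ Finset.range n, x ^ i • a i‖ ≤ M := by
  cases n with
  | zero => exact ⟨0, by simpa using hM⟩
  | succ n =>
    refine ⟨fun i => (i.factorial : ℝ)⁻¹ • iteratedDerivWithin i f (Icc 0 1) 0, fun x hx => ?_⟩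
    have htaylor : ‖f x - taylorWithinEval f n (Icc 0 1) 0 x‖ ≤
        M * (x - 0) ^ (n + 1) / n.factorial := by
      refine taylor_mean_remainder_bound zero_le_one hf.contDiffOn hx fun y hy => ?_
      rw [iteratedDerivWithin_eq_iteratedDeriv (uniqueDiffOn_Icc zero_lt_one) hf.contDiffAt hy]
      exact hM y hy
    simp only [taylor_within_apply, sub_zero] at htaylor
    simp only [smul_smul, mul_comm (x ^ _)]
    have hM0 : 0 ≤ M := (norm_nonneg _).trans (hM x hx)
    calc _ ≤ M * x ^ (n + 1) / n.factorial := htaylor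
      _ ≤ M * x ^ (n + 1) :=
        div_le_self (mul_nonneg hM0 (pow_nonneg hx.1 _)) (Nat.one_le_cast.2 n.factorial_pos)
      _ ≤ M := mul_le_of_le_one_right hM0 (pow_le_one₀ hx.1 hx.2)

lemma IsExactBelow.norm_quadMoment_legPoly_le (hquad : IsExactBelow c b r)
    (hc : ∀ ℓ, c ℓ ∈ Icc (0 : ℝ) 1) {j : ℕ} (hnj : n ≤ j) (hjn : j + n ≤ r)
    (hf : ContDiff ℝ n f) (hM : ∀ x ∈ Icc (0 : ℝ) 1, ‖iteratedDeriv n f x‖ ≤ M) :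
    ‖quadMoment c b (legPoly j) f‖ ≤ (∑ ℓ, |b ℓ * (legPoly j).eval (c ℓ)|) * M := by
  obtain ⟨a, ha⟩ := exists_norm_sub_sum_pow_smul_le hf hM
  have hvanish :
      quadMoment c b (legPoly j) (fun x => ∑ i ∈ Finset.range n, x ^ i • a i) = 0 := by
    rw [hquad.quadMoment_sum_pow_smul (by have := natDegree_legPoly_le j; omega)]
    refine Finset.sum_eq_zero fun i hi => ?_
    have hij : i < j := (Finset.mem_range.1 hi).trans_le hnj
    rw [integral_legPoly_mul_eq_zero (by rwa [degree_X_pow, Nat.cast_lt]), zero_smul]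
  have := norm_quadMoment_le (b := b) (p := legPoly j) hc ha
  rwa [← Pi.sub_def, quadMoment_sub, hvanish, sub_zero] at this

lemma IsExactBelow.norm_moment_sub_quadMoment_le [CompleteSpace E] (hquad : IsExactBelow c b r)
    (hc : ∀ ℓ, c ℓ ∈ Icc (0 : ℝ) 1) (hpn : p.natDegree + n ≤ r)
    (hf : ContDiff ℝ n f) (hM : ∀ x ∈ Icc (0 : ℝ) 1, ‖iteratedDeriv n f x‖ ≤ M) :
    ‖moment p f - quadMoment c b p f‖ ≤
      ((∫ x in (0 : ℝ)..1, |p.eval x|) + ∑ ℓ, |b ℓ * p.eval (c ℓ)|) * M := by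
  obtain ⟨a, ha⟩ := exists_norm_sub_sum_pow_smul_le hf hM
  set q : ℝ → E := fun x => ∑ i ∈ Finset.range n, x ^ i • a i with hq
  have hexact : moment p q = quadMoment c b p q := by
    rw [hq, moment_sum_pow_smul, hquad.quadMoment_sum_pow_smul hpn]
  have hsplit : moment p f - quadMoment c b p f =
      moment p (f - q) - quadMoment c b p (f - q) := by
    rw [moment_sub hf.continuous (by fun_prop), quadMoment_sub, hexact]
    abel
  rw [hsplit, add_mul]
  exact (norm_sub_le _ _).trans (add_le_add (norm_moment_le ha) (norm_quadMoment_le hc ha))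

end Quadrature

section Asymptotics

variable {α ι E F : Type*} [Fintype ι] [NormedAddCommGroup E] [NormedSpace ℝ E]
  [NormedAddCommGroup F] [NormedSpace ℝ F] {l : Filter α} {c b : ι → ℝ} {n r : ℕ}

lemma IsExactBelow.isBigO_quadMoment_legPoly (hquad : IsExactBelow c b r)
    (hc : ∀ ℓ, c ℓ ∈ Icc (0 : ℝ) 1) {j : ℕ} (hnj : n ≤ j) (hjn : j + n ≤ r)
    {f : α → ℝ → E} {g : α → ℝ} (hf : ∀ a, ContDiff ℝ n (f a))
    (hfg : (fun z : α × ℝ => iteratedDeriv n (f z.1) z.2) =O[l ×ˢ 𝓟 (Icc 0 1)] fun z => g z.1) :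
    (fun a => quadMoment c b (legPoly j) (f a)) =O[l] g := by
  obtain ⟨M, hM⟩ := hfg.bound
  exact .of_bound _ <| (eventually_prod_principal_iff.1 hM).mono fun a ha =>
    (hquad.norm_quadMoment_legPoly_le hc hnj hjn (hf a) ha).trans_eq (mul_assoc _ _ _).symm

lemma IsExactBelow.isBigO_moment_sub_quadMoment [CompleteSpace E] (hquad : IsExactBelow c b r)
    (hc : ∀ ℓ, c ℓ ∈ Icc (0 : ℝ) 1) {p : ℝ[X]} (hpn : p.natDegree + n ≤ r)
    {f : α → ℝ → E} {g : α → ℝ} (hf : ∀ a, ContDiff ℝ n (f a))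
    (hfg : (fun z : α × ℝ => iteratedDeriv n (f z.1) z.2) =O[l ×ˢ 𝓟 (Icc 0 1)] fun z => g z.1) :
    (fun a => moment p (f a) - quadMoment c b p (f a)) =O[l] g := by
  obtain ⟨M, hM⟩ := hfg.bound
  exact .of_bound _ <| (eventually_prod_principal_iff.1 hM).mono fun a ha =>
    (hquad.norm_moment_sub_quadMoment_le hc hpn (hf a) ha).trans_eq (mul_assoc _ _ _).symm

lemma exists_norm_iteratedFDeriv_le_of_isCompact {G : E → F} (hG : ContDiff ℝ n G) {K : Set E}
    (hK : IsCompact K) : ∃ B, ∀ y ∈ K, ∀ i ≤ n, ‖iteratedFDeriv ℝ i G y‖ ≤ B := by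
  have hcont : ∀ i ≤ n, Continuous (iteratedFDeriv ℝ i G) :=
    fun i hi => hG.continuous_iteratedFDeriv (by exact_mod_cast hi)
  obtain ⟨B, hB⟩ := hK.exists_bound_of_continuousOn
    (f := fun y => ∑ i ∈ Finset.range (n + 1), ‖iteratedFDeriv ℝ i G y‖)
    (continuous_finsetSum _ fun i hi =>
      (hcont i (Nat.lt_succ_iff.1 (Finset.mem_range.1 hi))).norm).continuousOn
  refine ⟨B, fun y hy i hi => ?_⟩
  calc ‖iteratedFDeriv ℝ i G y‖
      ≤ ∑ i ∈ Finset.range (n + 1), ‖iteratedFDeriv ℝ i G y‖ :=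
        Finset.single_le_sum (f := fun i => ‖iteratedFDeriv ℝ i G y‖)
          (fun _ _ => norm_nonneg _) (Finset.mem_range.2 (Nat.lt_succ_iff.2 hi))
    _ ≤ B := (le_abs_self _).trans (hB y hy)

lemma isBigO_iteratedDeriv_comp {G : E → F} (hG : ContDiff ℝ n G) {K : Set E} (hK : IsCompact K)
    {V : α → ℝ → E} {x ε : α → ℝ} (hV : ∀ a, ContDiff ℝ n (V a)) (hVK : ∀ᶠ a in l, V a (x a) ∈ K)
    (hVε : ∀ i, 1 ≤ i → i ≤ n → (fun a => iteratedDeriv i (V a) (x a)) =O[l] fun a => ε a ^ i) :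
    (fun a => iteratedDeriv n (G ∘ V a) (x a)) =O[l] fun a => ε a ^ n := by
  obtain ⟨B, hB⟩ := exists_norm_iteratedFDeriv_le_of_isCompact hG hK
  have hbound : ∀ i ∈ Finset.Icc 1 n, ∃ D : ℝ,
      ∀ᶠ a in l, ‖iteratedDeriv i (V a) (x a)‖ ≤ D * ‖ε a ^ i‖ :=
    fun i hi => (hVε i (Finset.mem_Icc.1 hi).1 (Finset.mem_Icc.1 hi).2).bound
  choose! D hD using hbound
  set T := 1 + ∑ i ∈ Finset.Icc 1 n, |D i|
  have hT : 1 ≤ T := le_add_of_nonneg_right (Finset.sum_nonneg fun _ _ => abs_nonneg _)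
  have hDT : ∀ i ∈ Finset.Icc 1 n, D i ≤ T ^ i := fun i hi =>
    calc D i ≤ |D i| := le_abs_self _
      _ ≤ ∑ i ∈ Finset.Icc 1 n, |D i| :=
        Finset.single_le_sum (f := fun i => |D i|) (fun _ _ => abs_nonneg _) hi
      _ ≤ T := le_add_of_nonneg_left zero_le_one
      _ ≤ T ^ i := le_self_pow₀ hT (Nat.one_le_iff_ne_zero.1 (Finset.mem_Icc.1 hi).1)
  refine .of_bound (n.factorial * B * T ^ n) ?_
  filter_upwards [hVK, (Finset.Icc 1 n).eventually_all.2 hD] with a haK haD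
  rw [norm_pow, mul_assoc _ (T ^ n), ← mul_pow, ← norm_iteratedFDeriv_eq_norm_iteratedDeriv]
  refine norm_iteratedFDeriv_comp_le hG (hV a) le_rfl _ (fun i hi => hB _ haK i hi)
    fun i hi hin => ?_
  have hi_mem := Finset.mem_Icc.2 ⟨hi, hin⟩
  rw [norm_iteratedFDeriv_eq_norm_iteratedDeriv, mul_pow, ← norm_pow]
  exact (haD i hi_mem).trans (mul_le_mul_of_nonneg_right (hDT i hi_mem) (norm_nonneg _))

lemma isBigO_inner {α E : Type*} [NormedAddCommGroup E] [InnerProductSpace ℝ E] {l : Filter α}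
    {f g : α → E} {φ ψ : α → ℝ} (hf : f =O[l] φ) (hg : g =O[l] ψ) :
    (fun a => inner ℝ (f a) (g a)) =O[l] fun a => φ a * ψ a :=
  (IsBigO.of_bound' <| .of_forall fun a => by
    simpa only [norm_mul, norm_norm] using norm_inner_le_norm (f a) (g a)).trans
    (hf.norm_left.mul hg.norm_left)

end Asymptotics

section LegendreCurve

variable {E : Type*} [NormedAddCommGroup E] [NormedSpace ℝ E]

/-- The curve with initial value `y₀` whose velocity has the Legendre expansion
`∑_{j < s} P_j v_j`. -/
noncomputable def legendreCurve (s : ℕ) (y₀ : E) (v : ℕ → E) (x : ℝ) : E :=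
  y₀ + ∑ j ∈ Finset.range s, (∫ t in (0 : ℝ)..x, (legPoly j).eval t) • v j

variable {s : ℕ} {y₀ : E} {v : ℕ → E}

lemma legendreCurve_zero : legendreCurve s y₀ v 0 = y₀ := by
  simp [legendreCurve]

lemma hasDerivAt_legendreCurve (x : ℝ) :
    HasDerivAt (legendreCurve s y₀ v) (∑ j ∈ Finset.range s, (legPoly j).eval x • v j) x :=
  .const_add _ <| .fun_sum fun j _ =>
    ((legPoly j).continuous.integral_hasStrictDerivAt 0 x).hasDerivAt.smul_const _

lemma iteratedDeriv_succ_legendreCurve (i : ℕ) :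
    iteratedDeriv (i + 1) (legendreCurve s y₀ v) =
      fun x => ∑ j ∈ Finset.range s, (derivative^[i] (legPoly j)).eval x • v j := by
  induction i with
  | zero =>
    rw [zero_add, iteratedDeriv_one]
    exact funext fun x => (hasDerivAt_legendreCurve x).deriv
  | succ i ih =>
    rw [iteratedDeriv_succ, ih]
    refine funext fun x => HasDerivAt.deriv <| .fun_sum fun j _ => ?_
    rw [Function.iterate_succ_apply']
    exact (Polynomial.hasDerivAt _ x).smul_const _

lemma contDiff_legendreCurve {n : ℕ} : ContDiff ℝ n (legendreCurve s y₀ v) := by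
  refine contDiff_of_differentiable_iteratedDeriv fun m _ => ?_
  cases m with
  | zero =>
    rw [iteratedDeriv_zero]
    exact fun x => (hasDerivAt_legendreCurve x).differentiableAt
  | succ m =>
    rw [iteratedDeriv_succ_legendreCurve]
    fun_prop

lemma eqOn_legendreCurve {y : ℝ → E}
    (hy : ∀ x ∈ Icc (0 : ℝ) 1,
      HasDerivWithinAt y (∑ j ∈ Finset.range s, (legPoly j).eval x • v j) (Icc 0 1) x) :
    EqOn (legendreCurve s (y 0) v) y (Icc 0 1) := by
  refine eq_of_derivWithin_eq
    (fun x _ => (hasDerivAt_legendreCurve x).differentiableAt.differentiableWithinAt)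
    (fun x hx => (hy x hx).differentiableWithinAt) (fun x hx => ?_) legendreCurve_zero
  have hx' := Ico_subset_Icc_self hx
  have huniq := uniqueDiffOn_Icc zero_lt_one x hx'
  rw [(hy x hx').derivWithin huniq,
    (hasDerivAt_legendreCurve x).hasDerivWithinAt.derivWithin huniq]

lemma eqOn_legendreCurve_comp_mul {y : ℝ → E} {h : ℝ} (hh : 0 ≤ h)
    (hy : ∀ x ∈ Icc (0 : ℝ) 1,
      HasDerivWithinAt y (∑ j ∈ Finset.range s, (legPoly j).eval x • v j) (Icc 0 h) (x * h)) :
    EqOn (legendreCurve s (y 0) (h • v)) (fun x => y (x * h)) (Icc 0 1) := by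
  have hmaps : MapsTo (fun x => x * h) (Icc 0 1) (Icc 0 h) := fun x hx =>
    ⟨mul_nonneg hx.1 hh, mul_le_of_le_one_left hh hx.2⟩
  have hderiv : ∀ x ∈ Icc (0 : ℝ) 1, HasDerivWithinAt (fun x => y (x * h))
      (∑ j ∈ Finset.range s, (legPoly j).eval x • (h • v) j) (Icc 0 1) x := by
    intro x hx
    have hcomp := HasDerivWithinAt.scomp (g₁ := y) x (hy x hx)
      (hasDerivAt_mul_const h).hasDerivWithinAt hmaps
    simpa only [Function.comp_def, Finset.smul_sum, smul_comm h, Pi.smul_apply] using hcomp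
  simpa only [zero_mul] using eqOn_legendreCurve hderiv

lemma isBigO_iteratedDeriv_succ_legendreCurve {α : Type*} {l : Filter α} {y₀ : α → E}
    {v : α → ℕ → E} {x g : α → ℝ} {i : ℕ} (hx : ∀ᶠ a in l, x a ∈ Icc (0 : ℝ) 1)
    (hv : ∀ j < s, i ≤ j → (fun a => v a j) =O[l] g) :
    (fun a => iteratedDeriv (i + 1) (legendreCurve s (y₀ a) (v a)) (x a)) =O[l] g := by
  simp only [iteratedDeriv_succ_legendreCurve]
  refine IsBigO.fun_sum fun j hj => ?_
  obtain hij | hji := le_or_gt i j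
  · have heval : (fun a => (derivative^[i] (legPoly j)).eval (x a)) =O[l] fun _ => (1 : ℝ) :=
      ((Polynomial.continuous _).continuousOn.isBigO_principal isCompact_Icc
        (by simp)).comp_tendsto (tendsto_principal.2 hx)
    simpa using heval.smul (hv j (Finset.mem_range.1 hj) hij)
  · have hzero : derivative^[i] (legPoly j) = 0 :=
      iterate_derivative_eq_zero ((natDegree_legPoly_le j).trans_lt hji)
    simpa only [hzero, eval_zero, zero_smul] using isBigO_zero g l

end LegendreCurve

lemma inner_toEuclideanLin_self_eq_zero {n : Type*} [Fintype n] [DecidableEq n]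
    {J : Matrix n n ℝ} (hJ : Jᵀ = -J) (y : EuclideanSpace ℝ n) :
    inner ℝ y (toEuclideanLin J y) = 0 := by
  have hadj : LinearMap.adjoint (toEuclideanLin J) = -toEuclideanLin J := by
    rw [← toEuclideanLin_conjTranspose_eq_adjoint, conjTranspose_eq_transpose_of_trivial, hJ,
      map_neg]
  have hneg : inner ℝ y (toEuclideanLin J y) = -inner ℝ y (toEuclideanLin J y) := by
    conv_lhs => rw [← LinearMap.adjoint_inner_left, hadj, LinearMap.neg_apply, inner_neg_left,
      real_inner_comm]
  exact self_eq_neg.1 hneg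

section Bootstrap

variable {α ι E : Type*} [Fintype ι] [NormedAddCommGroup E] [NormedSpace ℝ E] {l : Filter α}
  {s r n : ℕ} {c b : ι → ℝ} {G : E → E} {K : Set E} {h : α → ℝ} {y₀ : α → E} {v : α → ℕ → E}

lemma isBigO_iteratedDeriv_comp_legendreCurve (hG : ContDiff ℝ n G) (hK : IsCompact K)
    (hVK : ∀ᶠ a in l, MapsTo (legendreCurve s (y₀ a) (v a)) (Icc 0 1) K)
    (hv : ∀ i < n, ∀ j < s, i ≤ j → (fun a => v a j) =O[l] fun a => h a ^ (i + 1)) :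
    (fun z : α × ℝ => iteratedDeriv n (G ∘ legendreCurve s (y₀ z.1) (v z.1)) z.2)
      =O[l ×ˢ 𝓟 (Icc 0 1)] fun z => h z.1 ^ n := by
  refine isBigO_iteratedDeriv_comp hG hK (V := fun z : α × ℝ => legendreCurve s (y₀ z.1) (v z.1))
    (fun _ => contDiff_legendreCurve) (eventually_prod_principal_iff.2 hVK) fun i hi hin => ?_
  obtain ⟨i, rfl⟩ := Nat.exists_eq_add_of_le' hi
  exact isBigO_iteratedDeriv_succ_legendreCurve
    (eventually_prod_principal_iff.2 <| .of_forall fun _ _ hx => hx)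
    fun j hj hij => (hv i hin j hj hij).comp_tendsto tendsto_fst

-- Bootstrap on `i`: the bounds below order `i` make the `i`-th derivative of `G ∘ V` of order
-- `h ^ i`, and orthogonality transfers this order to the `j`-th quadrature moment when `i ≤ j`.
lemma isBigO_coeff_legendreCurve (hG : ContDiff ℝ r G) (hquad : IsExactBelow c b r)
    (hc : ∀ ℓ, c ℓ ∈ Icc (0 : ℝ) 1) (hs : 2 * s ≤ r + 2) (hK : IsCompact K)
    (hVK : ∀ᶠ a in l, MapsTo (legendreCurve s (y₀ a) (v a)) (Icc 0 1) K)
    (hv : ∀ j < s, (fun a => v a j) =O[l]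
      fun a => h a • quadMoment c b (legPoly j) (G ∘ legendreCurve s (y₀ a) (v a)))
    (i : ℕ) : ∀ j < s, i ≤ j → (fun a => v a j) =O[l] fun a => h a ^ (i + 1) := by
  induction i using Nat.strong_induction_on with
  | _ i ih =>
    intro j hj hij
    have hGi : ContDiff ℝ i G := hG.of_le (by exact_mod_cast (by omega : i ≤ r))
    have hmoment : (fun a => quadMoment c b (legPoly j) (G ∘ legendreCurve s (y₀ a) (v a)))
        =O[l] fun a => h a ^ i :=
      hquad.isBigO_quadMoment_legPoly hc hij (by omega)
        (fun _ => hGi.comp contDiff_legendreCurve)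
        (isBigO_iteratedDeriv_comp_legendreCurve hGi hK hVK ih)
    refine (hv j hj).trans ?_
    simpa only [smul_eq_mul, pow_succ'] using (isBigO_refl h l).smul hmoment

end Bootstrap

section Energy

variable {E : Type*} [NormedAddCommGroup E] [InnerProductSpace ℝ E] [CompleteSpace E]
  {H : E → ℝ}

lemma contDiff_gradient {n : ℕ} (hH : ContDiff ℝ (n + 1) H) : ContDiff ℝ n (gradient H) :=
  (InnerProductSpace.toDual ℝ E).symm.contDiff.comp (hH.fderiv_right le_rfl)

lemma inner_moment {f : ℝ → E} (hf : Continuous f) (p : ℝ[X]) (w : E) :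
    inner ℝ (moment p f) w = ∫ x in (0 : ℝ)..1, p.eval x * inner ℝ (f x) w := by
  have hint : IntervalIntegrable (fun x => p.eval x • f x) volume 0 1 :=
    (p.continuous.smul hf).intervalIntegrable 0 1
  have hcomm := (innerSL ℝ w).intervalIntegral_comp_comm hint
  simpa only [innerSL_apply_apply, real_inner_comm _ w, real_inner_smul_left, moment]
    using hcomm.symm

lemma sub_eq_sum_inner_moment_gradient (hH : ContDiff ℝ 1 H) (s : ℕ) (y₀ : E) (v : ℕ → E) :
    H (legendreCurve s y₀ v 1) - H y₀ =
      ∑ j ∈ Finset.range s,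
        inner ℝ (moment (legPoly j) (gradient H ∘ legendreCurve s y₀ v)) (v j) := by
  set V := legendreCurve s y₀ v
  have hVcont : Continuous V := (contDiff_legendreCurve (n := 0)).continuous
  have hgrad : Continuous (gradient H ∘ V) :=
    (contDiff_gradient (n := 0) (by simpa using hH)).continuous.comp hVcont
  have hderiv : ∀ x, HasDerivAt (H ∘ V)
      (∑ j ∈ Finset.range s, (legPoly j).eval x * inner ℝ ((gradient H ∘ V) x) (v j)) x := by
    intro x
    have hHV := ((hH.differentiable one_ne_zero).differentiableAt (x := V x)).hasGradientAt
    simpa [inner_sum, real_inner_smul_right] using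
      hHV.hasFDerivAt.comp_hasDerivAt x (hasDerivAt_legendreCurve x)
  have hftc := intervalIntegral.integral_eq_sub_of_hasDerivAt (a := 0) (b := 1)
    (fun x _ => hderiv x) (Continuous.intervalIntegrable (by fun_prop) _ _)
  rw [intervalIntegral.integral_finsetSum
    fun _ _ => Continuous.intervalIntegrable (by fun_prop) _ _] at hftc
  simp only [inner_moment hgrad]
  rw [hftc]
  simp only [Function.comp_apply, V, legendreCurve_zero]

variable {α ι : Type*} [Fintype ι] {l : Filter α} {s r : ℕ} {c b : ι → ℝ} {K : Set E}
  {h : α → ℝ} {η : ℕ → α → ℝ} {y₀ : α → E} {v : α → ℕ → E} {L : E →L[ℝ] E}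

lemma isBigO_energy_legendreCurve (hL : ∀ y, inner ℝ y (L y) = 0)
    (hH : ContDiff ℝ (r + 1) H) (hquad : IsExactBelow c b r) (hc : ∀ ℓ, c ℓ ∈ Icc (0 : ℝ) 1)
    (hs : 2 * s ≤ r + 2) (hK : IsCompact K)
    (hη : ∀ j < s, η j =O[l] fun _ => (1 : ℝ))
    (hVK : ∀ᶠ a in l, MapsTo (legendreCurve s (y₀ a) (v a)) (Icc 0 1) K)
    (hv : ∀ᶠ a in l, ∀ j < s, v a j = h a • η j a •
      L (quadMoment c b (legPoly j) (gradient H ∘ legendreCurve s (y₀ a) (v a)))) :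
    (fun a => H (legendreCurve s (y₀ a) (v a) 1) - H (y₀ a)) =O[l] fun a => h a ^ (r + 1) := by
  have hG : ContDiff ℝ r (gradient H) := contDiff_gradient hH
  set f : α → ℝ → E := fun a => gradient H ∘ legendreCurve s (y₀ a) (v a)
  have hcoeff : ∀ i, ∀ j < s, i ≤ j → (fun a => v a j) =O[l] fun a => h a ^ (i + 1) := by
    refine isBigO_coeff_legendreCurve hG hquad hc hs hK hVK fun j hj => ?_
    have hvj : (fun a => v a j) =ᶠ[l]
        fun a => h a • η j a • L (quadMoment c b (legPoly j) (f a)) :=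
      hv.mono fun a ha => ha j hj
    refine hvj.trans_isBigO ((isBigO_refl h l).smul ?_)
    simpa only [one_smul] using (hη j hj).smul (L.isBigO_comp _ l)
  have herror : ∀ j < s,
      (fun a => moment (legPoly j) (f a) - quadMoment c b (legPoly j) (f a))
        =O[l] fun a => h a ^ (r - j) := by
    intro j hj
    have hGj : ContDiff ℝ (r - j : ℕ) (gradient H) :=
      hG.of_le (by exact_mod_cast r.sub_le j)
    exact hquad.isBigO_moment_sub_quadMoment hc (by have := natDegree_legPoly_le j; omega)
      (fun _ => hGj.comp contDiff_legendreCurve)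
      (isBigO_iteratedDeriv_comp_legendreCurve hGj hK hVK fun i _ => hcoeff i)
  have henergy : (fun a => H (legendreCurve s (y₀ a) (v a) 1) - H (y₀ a)) =ᶠ[l]
      fun a => ∑ j ∈ Finset.range s,
        inner ℝ (moment (legPoly j) (f a) - quadMoment c b (legPoly j) (f a)) (v a j) := by
    filter_upwards [hv] with a ha
    rw [sub_eq_sum_inner_moment_gradient (hH.of_le le_add_self)]
    refine Finset.sum_congr rfl fun j hj => ?_
    have horth : inner ℝ (quadMoment c b (legPoly j) (f a)) (v a j) = 0 := by
      rw [ha j (Finset.mem_range.1 hj), real_inner_smul_right, real_inner_smul_right, hL,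
        mul_zero, mul_zero]
    rw [inner_sub_left, horth, sub_zero]
  refine henergy.trans_isBigO (IsBigO.fun_sum fun j hj => ?_)
  have hjs := Finset.mem_range.1 hj
  have hpow : r - j + (j + 1) = r + 1 := by omega
  simpa only [← pow_add, hpow] using isBigO_inner (herror j hjs) (hcoeff j j hjs le_rfl)

theorem stmt13_general (hL : ∀ y, inner ℝ y (L y) = 0) (hH : ContDiff ℝ (r + 1) H)
    (hs : 2 * s ≤ r + 2) (hc : ∀ ℓ, c ℓ ∈ Icc (0 : ℝ) 1) (hquad : IsExactBelow c b r)
    {h₀ : ℝ} {η : ℕ → ℝ → ℝ} (hη : ∃ B : ℝ, ∀ h ∈ Ioc 0 h₀, ∀ j < s, |η j h| ≤ B)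
    {u : ℝ → ℝ → E} (hK : IsCompact K) (huK : ∀ h ∈ Ioc 0 h₀, ∀ t ∈ Icc 0 h, u h t ∈ K)
    (hu : ∀ h ∈ Ioc 0 h₀, ∀ x ∈ Icc (0 : ℝ) 1,
      HasDerivWithinAt (u h)
        (∑ j ∈ Finset.range s, legP j x •
          (η j h • ∑ ℓ, (b ℓ * legP j (c ℓ)) • L (gradient H (u h (c ℓ * h)))))
        (Icc 0 h) (x * h)) :
    ∃ C > 0, ∀ h ∈ Ioc 0 h₀, |H (u h h) - H (u h 0)| ≤ C * h ^ (r + 1) := by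
  set v : ℝ → ℕ → E := fun h => h • fun j =>
    η j h • L (quadMoment c b (legPoly j) fun x => gradient H (u h (x * h)))
  have hcurve : ∀ h ∈ Ioc 0 h₀,
      EqOn (legendreCurve s (u h 0) (v h)) (fun x => u h (x * h)) (Icc 0 1) := by
    refine fun h hh => eqOn_legendreCurve_comp_mul hh.1.le fun x hx => ?_
    simpa only [quadMoment, map_sum, map_smul, legP_eq_eval_legPoly] using hu h hh x hx
  have hcurveK : ∀ h ∈ Ioc 0 h₀, MapsTo (legendreCurve s (u h 0) (v h)) (Icc 0 1) K := by
    intro h hh x hx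
    rw [hcurve h hh hx]
    exact huK h hh _ ⟨mul_nonneg hx.1 hh.1.le, mul_le_of_le_one_left hh.1.le hx.2⟩
  have hcoeff : ∀ h ∈ Ioc 0 h₀, ∀ j < s, v h j = h • η j h •
      L (quadMoment c b (legPoly j) (gradient H ∘ legendreCurve s (u h 0) (v h))) := by
    intro h hh j _
    rw [quadMoment_congr hc ((hcurve h hh).comp_left (g := gradient H))]
    rfl
  have hηO : ∀ j < s, η j =O[𝓟 (Ioc 0 h₀)] fun _ => (1 : ℝ) := by
    obtain ⟨B, hB⟩ := hη
    exact fun j hj => .of_bound B <| eventually_principal.2 fun h hh => by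
      simpa using hB h hh j hj
  obtain ⟨C, hC, hbound⟩ := (isBigO_energy_legendreCurve hL hH hquad hc hs hK hηO
    (eventually_principal.2 hcurveK) (eventually_principal.2 hcoeff)).exists_pos
  refine ⟨C, hC, fun h hh => ?_⟩
  have hend := (hcurve h hh ⟨zero_le_one, le_rfl⟩).trans (congrArg (u h) (one_mul h))
  have hnorm := isBigOWith_principal.1 hbound h hh
  rwa [hend, Real.norm_eq_abs, Real.norm_of_nonneg (pow_nonneg hh.1.le _)] at hnorm

end Energy

end

/-- Theorem 3 of the paper, asymptotic part.  With `J` skew-symmetric,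
`H` of class `C^∞`, a quadrature exact on `Π_{2k-1}`, uniformly bounded coefficients
`η̂_j(h)`, and polynomial maps `u_h ∈ Π_s`, `u_h(0) = y₀`, with range in a fixed compact set,
satisfying `u_h'(ch) = ∑_{j<s} P_j(c) η̂_j(h) γ̂_j(h)` with
`γ̂_j(h) = ∑_ℓ b_ℓ P_j(c_ℓ) J ∇H(u_h(c_ℓ h))`, one has
`H(u_h(h)) - H(y₀) = O(h^{2k+1})` as `h → 0⁺`. -/
theorem stmt13 (m : ℕ) (hm : 1 ≤ m)
    (J : Matrix (Fin (2 * m)) (Fin (2 * m)) ℝ) (hJ : Jᵀ = -J)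
    (H : EuclideanSpace ℝ (Fin (2 * m)) → ℝ) (hH : ContDiff ℝ (⊤ : ℕ∞) H)
    (s k : ℕ) (hs : 1 ≤ s) (hk : s ≤ k)
    (c b : Fin k → ℝ) (hc : ∀ ℓ, c ℓ ∈ Set.Icc (0:ℝ) 1)
    (hquad : ∀ q : Polynomial ℝ, q.natDegree ≤ 2 * k - 1 →
      ∑ ℓ, b ℓ * q.eval (c ℓ) = ∫ x in (0:ℝ)..1, q.eval x)
    (h₀ : ℝ) (hh₀ : 0 < h₀)
    (y₀ : EuclideanSpace ℝ (Fin (2 * m)))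
    (η : ℕ → ℝ → ℝ)
    (hηbdd : ∃ B : ℝ, ∀ h ∈ Set.Ioc (0:ℝ) h₀, ∀ j, j < s → |η j h| ≤ B)
    (u : ℝ → ℝ → EuclideanSpace ℝ (Fin (2 * m)))
    (hu0 : ∀ h ∈ Set.Ioc (0:ℝ) h₀, u h 0 = y₀)
    (hupoly : ∀ h ∈ Set.Ioc (0:ℝ) h₀,
      ∃ a : Fin (s + 1) → EuclideanSpace ℝ (Fin (2 * m)),
        ∀ t : ℝ, u h t = ∑ i : Fin (s + 1), t ^ (i : ℕ) • a i)
    (K : Set (EuclideanSpace ℝ (Fin (2 * m)))) (hK : IsCompact K)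
    (huK : ∀ h ∈ Set.Ioc (0:ℝ) h₀, ∀ t ∈ Set.Icc 0 h, u h t ∈ K)
    (hu' : ∀ h ∈ Set.Ioc (0:ℝ) h₀, ∀ cc ∈ Set.Icc (0:ℝ) 1,
      HasDerivAt (u h)
        (∑ j ∈ Finset.range s, legP j cc •
          (η j h • ∑ ℓ, (b ℓ * legP j (c ℓ)) •
            Matrix.toEuclideanLin J (gradient H (u h (c ℓ * h)))))
        (cc * h)) :
    ∃ C > (0:ℝ), ∃ h₁ > (0:ℝ), ∀ h : ℝ, 0 < h → h ≤ min h₀ h₁ →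
      |H (u h h) - H y₀| ≤ C * h ^ (2 * k + 1) := by
  obtain ⟨C, hC, hbound⟩ :=
    stmt13_general (L := (toEuclideanLin J).toContinuousLinearMap) (r := 2 * k)
      (inner_toEuclideanLin_self_eq_zero hJ) (by exact_mod_cast contDiff_infty.1 hH (2 * k + 1))
      (by omega) hc (isExactBelow_of_natDegree_le hquad) hηbdd hK huK
      fun h hh x hx => (hu' h hh x hx).hasDerivWithinAt
  exact ⟨C, hC, h₀, hh₀, fun h hpos hle => by
    simpa only [hu0 h ⟨hpos, hle.trans (min_le_left _ _)⟩] using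
      hbound h ⟨hpos, hle.trans (min_le_left _ _)⟩⟩
end

section
/- (Theorem 4 of the paper, exact-conservation part.) Let m ≥ 1, d = 2m, let s > ν ≥ 1, r ≥ s, and let L : ℝ^d → ℝ^ν have polynomial components with s · (max_i deg L_i) ≤ 2r. Let (ĉ_ℓ, b̂_ℓ)_{ℓ=1}^r be a quadrature on [0,1] exact for polynomials of degree ≤ 2r−1, let h > 0, and let γ̂₀, …, γ̂_{s−1} ∈ ℝ^d be arbitrary. Let u : [0,h] → ℝ^d be a polynomial map of degree ≤ s, set φ̂_j = Σ_{ℓ=1}^r b̂_ℓ P_j(ĉ_ℓ) ∇L(u(ĉ_ℓ h)) ∈ ℝ^{d×ν}, and define η̂_j = 1 for 0 ≤ j ≤ s−ν−1 and η̂_j = 1 − h^{2(s−1−j)} α̂_j for s−ν ≤ j ≤ s−1, where the reals α̂_j satisfy Σ_{j=s−ν}^{s−1} h^{2(s−1−j)} α̂_j φ̂_j^T γ̂_j = Σ_{j=0}^{s−1} φ̂_j^T γ̂_j. If u'(ch) = Σ_{j=0}^{s−1} P_j(c) η̂_j γ̂_j for all c ∈ [0,1], then L(u(h)) = L(u(0)).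 -/
open MeasureTheory Polynomial
open scoped RealInnerProductSpace

/- Along the curve, `p(c) = L(u(ch))` is a polynomial in `c` of degree at most `2r`, so the
quadrature integrates `p'` exactly. This yields the discrete line integral
`L(u(h)) - L(u(0)) = h ∑_ℓ b_ℓ ⟪∇L(u(c_ℓ h)), u'(c_ℓ h)⟫ = h ∑_j η_j ⟪φ_j, γ_j⟫`, in which `u'` is
evaluated at the nodes only, and the equation defining the `α_j` says that the last sum vanishes. -/

section PolynomialCurve

/-- A polynomial curve of degree at most `s` in a real vector space, encoded by vector-valued
coefficients; this is the class `Π_s` of the paper. -/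
def IsPolynomialCurve {E : Type*} [AddCommGroup E] [Module ℝ E] (s : ℕ) (u : ℝ → E) : Prop :=
  ∃ a : Fin (s + 1) → E, ∀ t : ℝ, u t = ∑ i : Fin (s + 1), t ^ (i : ℕ) • a i

theorem IsPolynomialCurve.comp_mul_const {E : Type*} [AddCommGroup E] [Module ℝ E] {s : ℕ}
    {u : ℝ → E} (hu : IsPolynomialCurve s u) (h : ℝ) :
    IsPolynomialCurve s fun x => u (x * h) := by
  obtain ⟨a, ha⟩ := hu
  exact ⟨fun i => h ^ (i : ℕ) • a i, fun x => by simp only [ha, mul_pow, smul_smul]⟩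

variable {ι : Type*} {s : ℕ} {u : ℝ → EuclideanSpace ℝ ι}

theorem IsPolynomialCurve.exists_polynomial_eval_eq_apply (hu : IsPolynomialCurve s u) (n : ι) :
    ∃ q : ℝ[X], q.natDegree ≤ s ∧ ∀ x, q.eval x = u x n := by
  obtain ⟨a, ha⟩ := hu
  refine ⟨∑ i : Fin (s + 1), C (a i n) * X ^ (i : ℕ), ?_, fun x => ?_⟩
  · exact natDegree_sum_le_of_forall_le _ _ fun i _ =>
      (natDegree_C_mul_X_pow_le _ _).trans (Nat.lt_succ_iff.mp i.isLt)
  · simp only [ha, eval_finsetSum, eval_mul, eval_C, eval_pow, eval_X, WithLp.ofLp_sum,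
      Finset.sum_apply, PiLp.smul_apply, smul_eq_mul, mul_comm]

theorem IsPolynomialCurve.exists_polynomial_eval_eq_mvPolynomial_eval
    (hu : IsPolynomialCurve s u) (L : MvPolynomial ι ℝ) :
    ∃ p : ℝ[X], p.natDegree ≤ s * L.totalDegree ∧
      ∀ x, p.eval x = MvPolynomial.eval (fun n => u x n) L := by
  choose U hUdeg hUeval using hu.exists_polynomial_eval_eq_apply
  refine ⟨MvPolynomial.aeval U L, ?_, fun x => ?_⟩
  · exact (MvPolynomial.aeval_natDegree_le L le_rfl U hUdeg).trans_eq (mul_comm _ _)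
  · have h_algebraMap : (evalRingHom x).comp (algebraMap ℝ ℝ[X]) = RingHom.id ℝ :=
      RingHom.ext fun y => by simp
    simp only [MvPolynomial.aeval_def, MvPolynomial.polynomial_eval_eval₂, h_algebraMap, hUeval,
      MvPolynomial.eval₂_id]

end PolynomialCurve

theorem differentiable_mvPolynomial_eval_euclideanSpace {ι : Type*} [Finite ι]
    (L : MvPolynomial ι ℝ) :
    Differentiable ℝ fun y : EuclideanSpace ℝ ι => MvPolynomial.eval (fun n => y n) L := by
  have := Fintype.ofFinite ι
  have hL : Differentiable ℝ fun y : ι → ℝ => MvPolynomial.eval y L :=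
    fun y => (AnalyticOnNhd.eval_mvPolynomial L y (Set.mem_univ y)).differentiableAt
  exact hL.comp (EuclideanSpace.equiv ι ℝ).differentiable

section Quadrature

variable {κ : Type*} [Fintype κ]

/-- The quadrature on `[0, 1]` with nodes `c` and weights `b` is exact for polynomials of degree at
most `n`. The nodes are not required to lie in `[0, 1]`. -/
def QuadratureExact (n : ℕ) (c b : κ → ℝ) : Prop :=
  ∀ q : ℝ[X], q.natDegree ≤ n → ∑ ℓ, b ℓ * q.eval (c ℓ) = ∫ x in (0 : ℝ)..1, q.eval x

theorem QuadratureExact.sum_mul_eval_derivative {n : ℕ} {c b : κ → ℝ}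
    (hcb : QuadratureExact n c b) {p : ℝ[X]} (hp : p.natDegree ≤ n + 1) :
    ∑ ℓ, b ℓ * p.derivative.eval (c ℓ) = p.eval 1 - p.eval 0 := by
  rw [hcb _ ((natDegree_derivative_le p).trans (Nat.sub_le_of_le_add hp))]
  exact intervalIntegral.integral_eq_sub_of_hasDerivAt (fun x _ => p.hasDerivAt x)
    (p.derivative.continuous.intervalIntegrable _ _)

variable {E : Type*} [NormedAddCommGroup E] [InnerProductSpace ℝ E]

/-- The discrete Fourier coefficient `φ̂ = ∑_ℓ b_ℓ P(c_ℓ) g_ℓ`: the quadrature approximation of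
`∫₀¹ P g`, where `g ℓ` stands for the value of the vector field at the node `c ℓ`. -/
def discreteFourierCoeff (c b : κ → ℝ) (P : ℝ → ℝ) (g : κ → E) : E :=
  ∑ ℓ, (b ℓ * P (c ℓ)) • g ℓ

theorem sum_mul_inner_sum_eq_sum_mul_inner_discreteFourierCoeff (c b : κ → ℝ) (P : ℕ → ℝ → ℝ)
    (g : κ → E) (J : Finset ℕ) (η : ℕ → ℝ) (γ : ℕ → E) :
    ∑ ℓ, b ℓ * ⟪g ℓ, ∑ j ∈ J, P j (c ℓ) • (η j • γ j)⟫ =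
      ∑ j ∈ J, η j * ⟪discreteFourierCoeff c b (P j) g, γ j⟫ := by
  simp only [discreteFourierCoeff, sum_inner, inner_sum, real_inner_smul_left,
    real_inner_smul_right, Finset.mul_sum]
  rw [Finset.sum_comm]
  exact Finset.sum_congr rfl fun j _ => Finset.sum_congr rfl fun ℓ _ => by ring

end Quadrature

theorem hasDerivAt_comp_mul_const_of_hasGradientAt {E : Type*} [NormedAddCommGroup E]
    [InnerProductSpace ℝ E] [CompleteSpace E] {f : E → ℝ} {g v : E} {u : ℝ → E} {x h : ℝ}
    (hf : HasGradientAt f g (u (x * h))) (hu : HasDerivAt u v (x * h)) :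
    HasDerivAt (fun x => f (u (x * h))) (h * ⟪g, v⟫) x := by
  have hfu : HasDerivAt (f ∘ u) ⟪g, v⟫ (x * h) := by
    simpa using hf.hasFDerivAt.comp_hasDerivAt (x * h) hu
  rw [mul_comm h]
  exact hfu.comp x (hasDerivAt_mul_const h)

theorem QuadratureExact.sub_eq_mul_sum_inner_gradient {ι κ : Type*} [Fintype ι] [Fintype κ]
    {s n : ℕ} {h : ℝ} {L : MvPolynomial ι ℝ} {f : EuclideanSpace ℝ ι → ℝ}
    (hf : ∀ y, f y = MvPolynomial.eval (fun i => y i) L)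
    {u : ℝ → EuclideanSpace ℝ ι} (hu : IsPolynomialCurve s u)
    {c b : κ → ℝ} (hcb : QuadratureExact n c b) (hdeg : s * L.totalDegree ≤ n + 1)
    {v : κ → EuclideanSpace ℝ ι} (huv : ∀ ℓ, HasDerivAt u (v ℓ) (c ℓ * h)) :
    f (u h) - f (u 0) = h * ∑ ℓ, b ℓ * ⟪gradient f (u (c ℓ * h)), v ℓ⟫ := by
  obtain ⟨p, hp_deg, hp_eval⟩ :=
    (hu.comp_mul_const h).exists_polynomial_eval_eq_mvPolynomial_eval L
  have hp : (fun x => p.eval x) = fun x => f (u (x * h)) :=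
    funext fun x => (hp_eval x).trans (hf _).symm
  have hf_diff : Differentiable ℝ f :=
    funext hf ▸ differentiable_mvPolynomial_eval_euclideanSpace L
  have hp_deriv (ℓ : κ) :
      p.derivative.eval (c ℓ) = h * ⟪gradient f (u (c ℓ * h)), v ℓ⟫ :=
    (p.hasDerivAt (c ℓ)).unique <| hp ▸
      hasDerivAt_comp_mul_const_of_hasGradientAt (hf_diff _).hasGradientAt (huv ℓ)
  calc f (u h) - f (u 0) = p.eval 1 - p.eval 0 := by
        simp only [congrFun hp, one_mul, zero_mul]
    _ = ∑ ℓ, b ℓ * p.derivative.eval (c ℓ) :=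
        (hcb.sum_mul_eval_derivative (hp_deg.trans hdeg)).symm
    _ = h * ∑ ℓ, b ℓ * ⟪gradient f (u (c ℓ * h)), v ℓ⟫ := by
        simp only [hp_deriv, Finset.mul_sum, mul_left_comm]

theorem sum_range_mul_eq_sub_of_eq_one_sub {R : Type*} [NonAssocRing R] {k s : ℕ} (hks : k ≤ s)
    {η β x : ℕ → R} (hη_one : ∀ j < k, η j = 1) (hη_sub : ∀ j, k ≤ j → j < s → η j = 1 - β j) :
    ∑ j ∈ Finset.range s, η j * x j =
      ∑ j ∈ Finset.range s, x j - ∑ j ∈ Finset.Ico k s, β j * x j := by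
  have h_low : ∑ j ∈ Finset.range k, η j * x j = ∑ j ∈ Finset.range k, x j :=
    Finset.sum_congr rfl fun j hj => by rw [hη_one j (Finset.mem_range.mp hj), one_mul]
  have h_high : ∑ j ∈ Finset.Ico k s, η j * x j =
      ∑ j ∈ Finset.Ico k s, x j - ∑ j ∈ Finset.Ico k s, β j * x j := by
    rw [← Finset.sum_sub_distrib]
    refine Finset.sum_congr rfl fun j hj => ?_
    obtain ⟨hkj, hjs⟩ := Finset.mem_Ico.mp hj
    rw [hη_sub j hkj hjs, sub_mul, one_mul]
  rw [← Finset.sum_range_add_sum_Ico _ hks, ← Finset.sum_range_add_sum_Ico x hks, h_low, h_high,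
    add_sub_assoc]

theorem stmt14_general {ι κ : Type*} [Fintype ι] [Fintype κ] {k s n : ℕ}
    {L : MvPolynomial ι ℝ} {f : EuclideanSpace ℝ ι → ℝ}
    (hf : ∀ y, f y = MvPolynomial.eval (fun i => y i) L)
    {u : ℝ → EuclideanSpace ℝ ι} (hu : IsPolynomialCurve s u)
    (hdeg : s * L.totalDegree ≤ n + 1) {c b : κ → ℝ} (hcb : QuadratureExact n c b)
    {h : ℝ} {P : ℕ → ℝ → ℝ} {η β : ℕ → ℝ} {γ φ : ℕ → EuclideanSpace ℝ ι}
    (hu' : ∀ ℓ, HasDerivAt u (∑ j ∈ Finset.range s, P j (c ℓ) • (η j • γ j)) (c ℓ * h))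
    (hφ : ∀ j, φ j = discreteFourierCoeff c b (P j) fun ℓ => gradient f (u (c ℓ * h)))
    (hks : k ≤ s) (hη_one : ∀ j < k, η j = 1) (hη_sub : ∀ j, k ≤ j → j < s → η j = 1 - β j)
    (hβ : ∑ j ∈ Finset.Ico k s, β j * ⟪φ j, γ j⟫ = ∑ j ∈ Finset.range s, ⟪φ j, γ j⟫) :
    f (u h) = f (u 0) := by
  have h_sum : ∑ j ∈ Finset.range s, η j * ⟪φ j, γ j⟫ = 0 := by
    rw [sum_range_mul_eq_sub_of_eq_one_sub hks hη_one hη_sub, hβ, sub_self]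
  have h_line : f (u h) - f (u 0) = h * ∑ j ∈ Finset.range s, η j * ⟪φ j, γ j⟫ := by
    simp only [hφ]
    rw [hcb.sub_eq_mul_sum_inner_gradient hf hu hdeg hu',
      sum_mul_inner_sum_eq_sum_mul_inner_discreteFourierCoeff]
  rw [h_sum, mul_zero] at h_line
  exact sub_eq_zero.mp h_line

/-- Theorem 4 of the paper, exact-conservation part.  If the components
of `L : ℝ^d → ℝ^ν` are polynomials with `s · max_i deg L_i ≤ 2r`, the quadrature
`(ĉ_ℓ, b̂_ℓ)` is exact on `Π_{2r-1}`, `u ∈ Π_s`,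
`φ̂_j = ∑_ℓ b̂_ℓ P_j(ĉ_ℓ) ∇L(u(ĉ_ℓ h))`, `η̂_j = 1` for `j ≤ s-ν-1` and
`η̂_j = 1 - h^{2(s-1-j)} α̂_j` otherwise, with the `α̂_j` solving
`∑_{j=s-ν}^{s-1} h^{2(s-1-j)} α̂_j φ̂_jᵀ γ̂_j = ∑_{j=0}^{s-1} φ̂_jᵀ γ̂_j`, and if
`u'(ch) = ∑_{j<s} P_j(c) η̂_j γ̂_j` on `[0,1]`, then `L(u(h)) = L(u(0))`. -/
theorem stmt14 (m : ℕ) (hm : 1 ≤ m) (s ν r : ℕ) (hν : 1 ≤ ν) (hνs : ν < s) (hr : s ≤ r)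
    (L : Fin ν → MvPolynomial (Fin (2 * m)) ℝ)
    (hLdeg : ∀ i, s * (L i).totalDegree ≤ 2 * r)
    (Lf : Fin ν → EuclideanSpace ℝ (Fin (2 * m)) → ℝ)
    (hLf : ∀ i y, Lf i y = MvPolynomial.eval (fun n => y n) (L i))
    (ch bh : Fin r → ℝ) (hch : ∀ ℓ, ch ℓ ∈ Set.Icc (0:ℝ) 1)
    (hquad : ∀ q : Polynomial ℝ, q.natDegree ≤ 2 * r - 1 →
      ∑ ℓ, bh ℓ * q.eval (ch ℓ) = ∫ x in (0:ℝ)..1, q.eval x)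
    (h : ℝ) (hh : 0 < h)
    (γc : ℕ → EuclideanSpace ℝ (Fin (2 * m)))
    (u : ℝ → EuclideanSpace ℝ (Fin (2 * m)))
    (hupoly : ∃ a : Fin (s + 1) → EuclideanSpace ℝ (Fin (2 * m)),
      ∀ t : ℝ, u t = ∑ i : Fin (s + 1), t ^ (i : ℕ) • a i)
    (φ : ℕ → Fin ν → EuclideanSpace ℝ (Fin (2 * m)))
    (hφ : ∀ j i, φ j i = ∑ ℓ, (bh ℓ * legP j (ch ℓ)) • gradient (Lf i) (u (ch ℓ * h)))
    (α : ℕ → ℝ)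
    (hα : ∀ i : Fin ν,
      ∑ j ∈ Finset.Ico (s - ν) s, h ^ (2 * (s - 1 - j)) * α j * ⟪φ j i, γc j⟫ =
      ∑ j ∈ Finset.range s, ⟪φ j i, γc j⟫)
    (η : ℕ → ℝ)
    (hη₁ : ∀ j, j ≤ s - ν - 1 → η j = 1)
    (hη₂ : ∀ j, s - ν ≤ j → j ≤ s - 1 → η j = 1 - h ^ (2 * (s - 1 - j)) * α j)
    (hu' : ∀ cc ∈ Set.Icc (0:ℝ) 1,
      HasDerivAt u (∑ j ∈ Finset.range s, legP j cc • (η j • γc j)) (cc * h)) :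
    ∀ i : Fin ν, Lf i (u h) = Lf i (u 0) := by
  exact fun i => stmt14_general (hLf i) hupoly ((hLdeg i).trans (by omega)) hquad
    (fun ℓ => hu' (ch ℓ) (hch ℓ)) (hφ · i) (Nat.sub_le s ν) (fun j _ => hη₁ j (by omega))
    (fun j hj _ => hη₂ j hj (by omega)) (hα i)
end

section
/- (Symmetry criterion for ELIM/HBVM Butcher matrices, core of Theorem 6 of the paper.) Let k ≥ s ≥ 1, let c₁ < … < c_k in (0,1) and b₁, …, b_k > 0 satisfy the symmetry conditions c_{k+1−i} = 1 − c_i and b_{k+1−i} = b_i for all i, and assume the quadrature (c_ℓ, b_ℓ) is exact for polynomials of degree ≤ s−1 (so that Σ_ℓ b_ℓ P_m(c_ℓ)·1 reproduces ∫₀¹ P_m for m ≤ s−1; in particular Σ_ℓ b_ℓ = 1). Let η₀ = 1 and η₁, …, η_{s−1} ∈ ℝ be arbitrary, and define the k×k matrix A by a_{ij} = b_j · Σ_{m=0}^{s−1} η_m (∫₀^{c_i} P_m(x) dx) P_m(c_j). Then a_{ij} + a_{k+1−i, k+1−j} = b_j for all 1 ≤ i, j ≤ k. -/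
open MeasureTheory Polynomial

/-! The reflection `x ↦ 1 - x` multiplies `P m` by `(-1) ^ m` and carries `∫₀^{1-x} P m` to
`(-1) ^ m * ∫ₓ¹ P m`. In the `m`-th term of `a (k+1-i) (k+1-j)` the two signs cancel, so adding
the `m`-th term of `a i j` completes the integral to `∫₀¹ P m`, which vanishes unless `m = 0`. -/

section Reflection

variable {𝕜 : Type*} [RCLike 𝕜] {f : ℝ → 𝕜} {a b : ℝ} {ε : 𝕜}

theorem integral_reflect_right (hf : ∀ x, f (a + b - x) = ε * f x) (x : ℝ) :
    ∫ t in a..(a + b - x), f t = ε * ∫ t in x..b, f t := by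
  calc ∫ t in a..(a + b - x), f t
      = ∫ t in x..b, f (a + b - t) := by
        rw [intervalIntegral.integral_comp_sub_left, add_sub_cancel_right]
    _ = ε * ∫ t in x..b, f t := by
        simp only [hf, intervalIntegral.integral_const_mul]

theorem integral_mul_add_integral_reflect_mul_reflect
    (hf : ∀ x, f (a + b - x) = ε * f x) {x : ℝ}
    (hax : IntervalIntegrable f volume a x) (hxb : IntervalIntegrable f volume x b) (y : ℝ) :
    (∫ t in a..x, f t) * f y + (∫ t in a..(a + b - x), f t) * f (a + b - y) =
      (∫ t in a..b, f t) * f y := by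
  have reflect_twice : ε * f (a + b - y) = f y := by rw [← hf, sub_sub_cancel]
  calc (∫ t in a..x, f t) * f y + (∫ t in a..(a + b - x), f t) * f (a + b - y)
      = (∫ t in a..x, f t) * f y + (∫ t in x..b, f t) * (ε * f (a + b - y)) := by
        rw [integral_reflect_right hf]
        ring
    _ = (∫ t in a..b, f t) * f y := by
        rw [reflect_twice, ← add_mul, intervalIntegral.integral_add_adjacent_intervals hax hxb]

end Reflection

theorem isRoot_iterate_derivative_pow {R : Type*} [CommSemiring R] {p : R[X]} {a : R}
    (ha : p.IsRoot a) {m n : ℕ} (hmn : m < n) : (derivative^[m] (p ^ n)).IsRoot a := by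
  have dvd : p ∣ derivative^[m] (p ^ n) :=
    (dvd_pow_self p (Nat.sub_ne_zero_of_lt hmn)).trans (pow_sub_dvd_iterate_derivative_pow p n m)
  exact eval_eq_zero_of_dvd_of_eval_eq_zero dvd ha

theorem integral_eval_derivative (p : ℝ[X]) (a b : ℝ) :
    ∫ x in a..b, (derivative p).eval x = p.eval b - p.eval a :=
  intervalIntegral.integral_eq_sub_of_hasDerivAt (fun x _ => p.hasDerivAt x)
    ((derivative p).continuous.intervalIntegrable a b)

theorem integral_eval_iterate_derivative_pow_eq_zero {p : ℝ[X]} {a b : ℝ} (ha : p.IsRoot a)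
    (hb : p.IsRoot b) {m n : ℕ} (hm : m ≠ 0) (hmn : m ≤ n) :
    ∫ x in a..b, (derivative^[m] (p ^ n)).eval x = 0 := by
  obtain ⟨l, rfl⟩ := Nat.exists_eq_succ_of_ne_zero hm
  have hl : l < n := hmn
  rw [Function.iterate_succ_apply', integral_eval_derivative,
    (isRoot_iterate_derivative_pow ha hl).eq_zero, (isRoot_iterate_derivative_pow hb hl).eq_zero,
    sub_zero]

theorem eval_one_sub_iterate_derivative {R : Type*} [CommRing R] {p : R[X]}
    (hp : p.comp (1 - X) = p) (m : ℕ) (x : R) :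
    (derivative^[m] p).eval (1 - x) = (-1) ^ m * (derivative^[m] p).eval x := by
  have reflect : (derivative^[m] p).eval x = (-1) ^ m * (derivative^[m] p).eval (1 - x) := by
    simpa [hp, eval_comp] using congrArg (eval x) (iterate_derivative_comp_one_sub_X p m)
  rw [reflect, ← mul_assoc, ← mul_pow, neg_one_mul, neg_neg, one_pow, one_mul]

theorem legP_zero (x : ℝ) : legP 0 x = 1 := by simp [legP]

theorem continuous_legP (m : ℕ) : Continuous (legP m) :=
  continuous_const.mul (Polynomial.continuous _)

theorem legP_one_sub (m : ℕ) (x : ℝ) : legP m (1 - x) = (-1) ^ m * legP m x := by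
  have symm : ((X ^ 2 - X : ℝ[X]) ^ m).comp (1 - X) = (X ^ 2 - X) ^ m := by
    simp only [pow_comp, sub_comp, X_comp]
    ring
  rw [legP, legP, eval_one_sub_iterate_derivative symm, mul_left_comm]

theorem integral_legP (m : ℕ) : ∫ x in (0 : ℝ)..1, legP m x = if m = 0 then 1 else 0 := by
  split_ifs with hm
  · simp [hm, legP_zero]
  · simp only [legP, intervalIntegral.integral_const_mul]
    rw [integral_eval_iterate_derivative_pow_eq_zero (by simp) (by simp) hm le_rfl, mul_zero]

theorem integral_legP_mul_add_integral_legP_mul_one_sub (m : ℕ) (x y : ℝ) :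
    (∫ t in (0 : ℝ)..x, legP m t) * legP m y +
      (∫ t in (0 : ℝ)..(1 - x), legP m t) * legP m (1 - y) = if m = 0 then 1 else 0 := by
  have completed := integral_mul_add_integral_reflect_mul_reflect (f := legP m) (a := 0) (b := 1)
    (by simpa only [zero_add] using legP_one_sub m)
    ((continuous_legP m).intervalIntegrable 0 x) ((continuous_legP m).intervalIntegrable x 1) y
  rw [zero_add, integral_legP] at completed
  rw [completed]
  split_ifs with hm
  · rw [hm, legP_zero, one_mul]
  · rw [zero_mul]

/-- The kernel of the ELIM method with coefficients `η`, of which the Butcher matrix is the sampling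
`a i j = b j * elimKernel η s (c i) (c j)` at the abscissae. -/
noncomputable def elimKernel (η : ℕ → ℝ) (s : ℕ) (x y : ℝ) : ℝ :=
  ∑ m ∈ Finset.range s, η m * (∫ t in (0 : ℝ)..x, legP m t) * legP m y

theorem elimKernel_add_elimKernel_one_sub (η : ℕ → ℝ) {s : ℕ} (hs : 0 < s) (x y : ℝ) :
    elimKernel η s x y + elimKernel η s (1 - x) (1 - y) = η 0 := by
  calc elimKernel η s x y + elimKernel η s (1 - x) (1 - y)
      = ∑ m ∈ Finset.range s, η m * if m = 0 then 1 else 0 := by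
        simp only [elimKernel, ← Finset.sum_add_distrib, mul_assoc, ← mul_add,
          integral_legP_mul_add_integral_legP_mul_one_sub]
    _ = η 0 := by simp [hs]

theorem stmt17_general {ι : Type*} (σ : ι → ι) {s : ℕ} (hs : 0 < s) {c b : ι → ℝ}
    (hsymc : ∀ i, c (σ i) = 1 - c i) (hsymb : ∀ i, b (σ i) = b i) (η : ℕ → ℝ)
    {A : Matrix ι ι ℝ}
    (hA : ∀ i j, A i j = b j * ∑ m ∈ Finset.range s,
      η m * (∫ x in (0 : ℝ)..(c i), legP m x) * legP m (c j)) (i j : ι) :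
    A i j + A (σ i) (σ j) = b j * η 0 := by
  have sampled (i j : ι) : A i j = b j * elimKernel η s (c i) (c j) := hA i j
  rw [sampled, sampled, hsymb, hsymc, hsymc, ← mul_add, elimKernel_add_elimKernel_one_sub η hs]

/-- symmetry criterion for ELIM/HBVM Butcher matrices, core of Theorem 6.
For symmetrically distributed abscissae `c_{k+1-i} = 1 - c_i` with symmetric positive
weights `b_{k+1-i} = b_i` forming a quadrature exact on `Π_{s-1}`, `η₀ = 1` and arbitrary
`η₁, …, η_{s-1}`, the matrix `a_{ij} = b_j ∑_{m<s} η_m (∫₀^{c_i} P_m) P_m(c_j)` satisfies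
`a_{ij} + a_{k+1-i, k+1-j} = b_j` for all `i, j`. -/
theorem stmt17 (k s : ℕ) (hs : 1 ≤ s) (hks : s ≤ k)
    (c b : Fin k → ℝ) (hmono : StrictMono c) (hc : ∀ i, c i ∈ Set.Ioo (0:ℝ) 1)
    (hb : ∀ i, 0 < b i)
    (hsymc : ∀ i, c (Fin.rev i) = 1 - c i)
    (hsymb : ∀ i, b (Fin.rev i) = b i)
    (hquad : ∀ q : Polynomial ℝ, q.natDegree ≤ s - 1 →
      ∑ ℓ, b ℓ * q.eval (c ℓ) = ∫ x in (0:ℝ)..1, q.eval x)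
    (η : ℕ → ℝ) (hη0 : η 0 = 1)
    (A : Matrix (Fin k) (Fin k) ℝ)
    (hA : ∀ i j, A i j = b j * ∑ m ∈ Finset.range s,
      η m * (∫ x in (0:ℝ)..(c i), legP m x) * legP m (c j)) :
    ∀ i j, A i j + A (Fin.rev i) (Fin.rev j) = b j := by
  intro i j
  rw [stmt17_general Fin.rev hs hsymc hsymb η hA, hη0, mul_one]
end
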